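/- There exists a widely digitally delicate prime in base 5; that is, there exists a prime p such that for every natural number i and every digit d ∈ {0, 1, ..., 4} with d ≠ digit_i(p), where digit_i(p) denotes the i-th base-5 digit of p (counting from the least significant digit, i = 0, with digit_i(p) = 0 for all i at or beyond the number of base-5 digits of p, i.e., leading zeros), the number p + (d − digit_i(p))·5^i obtained by replacing the i-th base-5 digit of p (including leading zeros) with d is not prime. -/

import Mathlib

/-- The i-th base-5 digit (from the least significant, starting at i = 0) of n;
for i at or beyond the number of base-5 digits of n this is 0 (a leading zero). -/
def digit (n i : ℕ) : ℕ := n / 5 ^ i % 5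

/-- Modular exponentiation by repeated squaring, with fuel. -/
def powModAux (p : ℕ) : ℕ → ℕ → ℕ → ℕ
  | 0, _, _ => 1
  | f + 1, b, n => b ^ (n % 2) * powModAux p f (b * b % p) (n / 2) % p

theorem powModAux_modEq (p : ℕ) : ∀ f b n : ℕ, n < 2 ^ f → b ^ n ≡ powModAux p f b n [MOD p]
  | 0, b, n, h => by
    have : n = 0 := by simpa using h
    subst this
    rfl
  | f + 1, b, n, h => by
    have ih := powModAux_modEq p f (b * b % p) (n / 2) (by rw [pow_succ] at h; omega)
    have h1 : (b * b) ^ (n / 2) ≡ (b * b % p) ^ (n / 2) [MOD p] :=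
      ((Nat.mod_modEq _ _).symm).pow _
    have h2 : b ^ n = b ^ (n % 2) * (b * b) ^ (n / 2) := by
      conv_lhs => rw [← Nat.mod_add_div n 2, pow_add, pow_mul, pow_two]
    rw [h2]
    exact ((h1.trans ih).mul_left _).trans (Nat.mod_modEq _ _).symm

theorem wdd_pock (p k y f : ℕ) (hp2 : 2 ≤ p) (hf1 : k * 5 ^ 36 < 2 ^ f)
    (hf2 : k * 5 ^ 35 < 2 ^ f)
    (h1 : powModAux p f 2 (k * 5 ^ 36) = 1)
    (h2 : powModAux p f 2 (k * 5 ^ 35) = y + 1)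
    (hg : Nat.gcd y p = 1) (hlt : p < (5 ^ 36) ^ 2) : Nat.Prime p := by
  by_contra hnp
  have hq : (p.minFac).Prime := Nat.minFac_prime (by omega)
  have hsq : p.minFac ^ 2 ≤ p := Nat.minFac_sq_le_self (by omega) hnp
  have hqd : p.minFac ∣ p := Nat.minFac_dvd p
  generalize p.minFac = q at hq hsq hqd
  haveI : Fact q.Prime := ⟨hq⟩
  have key : ∀ n r : ℕ, 2 ^ n ≡ r [MOD p] → (2 : ZMod q) ^ n = (r : ZMod q) := by
    intro n r h2
    have h3 := (ZMod.natCast_eq_natCast_iff _ _ _).2 (h2.of_dvd hqd)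
    exact_mod_cast h3
  have e1 := key _ _ (powModAux_modEq p f 2 _ hf1)
  have e2 := key _ _ (powModAux_modEq p f 2 _ hf2)
  rw [h1] at e1
  rw [h2] at e2
  have hord : orderOf ((2 : ZMod q) ^ k) = 5 ^ (35 + 1) := by
    haveI : Fact (Nat.Prime 5) := ⟨by norm_num⟩
    apply orderOf_eq_prime_pow
    · rw [← pow_mul, e2]
      intro h
      have : (y : ZMod q) = 0 := by push_cast at h; simpa using h
      rw [ZMod.natCast_eq_zero_iff] at this
      have := Nat.dvd_gcd this hqd
      rw [hg] at this
      exact hq.one_lt.ne' (Nat.dvd_one.1 this)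
    · rw [← pow_mul, e1, Nat.cast_one]
  have hd := ZMod.orderOf_dvd_card_sub_one (p := q)
    (a := (2 : ZMod q) ^ k) (by
      intro h
      rw [h, orderOf_zero] at hord
      norm_num at hord)
  rw [hord] at hd
  have hle := Nat.le_of_dvd (by have := hq.two_le; omega) hd
  have : 5 ^ 36 ≤ q := by omega
  have h4 := Nat.pow_le_pow_left this 2
  exact absurd (h4.trans hsq) (not_le.2 hlt)

theorem wdd_prime : Nat.Prime 1565404608827094799022306688129901885986328125001 :=
  wdd_pock 1565404608827094799022306688129901885986328125001
    107573785598720721287880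
    255860136076181848922884702367846656392367316850 170
    (by norm_num) (by norm_num) (by norm_num)
    (by decide +kernel) (by decide +kernel) (by norm_num) (by norm_num)

theorem wdd_low : ∀ i < 70, ∀ d < 5,
    d ≠ digit 1565404608827094799022306688129901885986328125001 i →
    ∃ q ∈ [2, 3, 7, 11, 13, 17, 19, 31, 73, 107, 167, 313, 709, 829, 5167, 11489, 25847],
      (1565404608827094799022306688129901885986328125001
        - digit 1565404608827094799022306688129901885986328125001 i * 5 ^ i + d * 5 ^ i) % q = 0
      ∧ q < (1565404608827094799022306688129901885986328125001
        - digit 1565404608827094799022306688129901885986328125001 i * 5 ^ i + d * 5 ^ i) := by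
  unfold digit
  decide +kernel

theorem wdd_high : ∀ r < 144, ∀ d < 5, d ≠ 0 →
    ∃ q ∈ [2, 3, 7, 13, 17, 19, 31, 313, 829, 5167, 11489],
      (1565404608827094799022306688129901885986328125001 + d * 5 ^ r) % q = 0
      ∧ 5 ^ 144 % q = 1 ∧ 1 < q ∧ q < 20000 := by
  decide +kernel

/-- There exists a widely digitally delicate prime in base 5: a prime p such
that replacing any one of its base-5 digits, including any of its leading
zeros, by a different digit in {0, ..., 4} yields a number that is not prime. -/
theorem exists_widely_digitally_delicate_base_5 :
    ∃ p : ℕ, Nat.Prime p ∧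
      ∀ i : ℕ, ∀ d : ℕ, d ≤ 4 → d ≠ digit p i →
        ¬ Nat.Prime (p - digit p i * 5 ^ i + d * 5 ^ i) := by
  refine ⟨1565404608827094799022306688129901885986328125001, wdd_prime, ?_⟩
  intro i d hd hne hpr
  rcases lt_or_ge i 70 with hi | hi
  · obtain ⟨q, hq, h0, hlt⟩ := wdd_low i hi d (by omega) hne
    have hq1 : q ≠ 1 := by
      rintro rfl
      simp at hq
    rcases (Nat.dvd_prime hpr).1 (Nat.dvd_of_mod_eq_zero h0) with h | h
    · exact hq1 h
    · exact hlt.ne h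
  · have h5 : (5 : ℕ) ^ 70 ≤ 5 ^ i := Nat.pow_le_pow_right (by norm_num) hi
    have hdig : digit 1565404608827094799022306688129901885986328125001 i = 0 := by
      unfold digit
      rw [Nat.div_eq_of_lt (lt_of_lt_of_le (by norm_num) h5)]
    rw [hdig] at hne hpr
    rw [zero_mul, Nat.sub_zero] at hpr
    obtain ⟨q, -, h0, h144, hq1, hq2⟩ :=
      wdd_high (i % 144) (Nat.mod_lt _ (by norm_num)) d (by omega) hne
    have hm : 5 ^ i ≡ 5 ^ (i % 144) [MOD q] := by
      have h1 : 5 ^ 144 ≡ 1 [MOD q] := by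
        rw [Nat.ModEq, h144, Nat.mod_eq_of_lt hq1]
      conv_lhs => rw [← Nat.mod_add_div i 144, pow_add, pow_mul]
      simpa using ((h1.pow (i / 144)).mul_left (5 ^ (i % 144)))
    have h2 := (hm.mul_left d).add_left 1565404608827094799022306688129901885986328125001
    have h3 : q ∣ 1565404608827094799022306688129901885986328125001 + d * 5 ^ i :=
      Nat.dvd_of_mod_eq_zero (Eq.trans h2 h0)
    rcases (Nat.dvd_prime hpr).1 h3 with h | h
    · omega
    · have : 1565404608827094799022306688129901885986328125001 ≤ q := by
        rw [h]; exact Nat.le_add_right _ _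
      omega
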